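/- arXiv:1803.07705 — 3 statements merged into one kernel-verified Lean document; each statement's English description precedes it below -/
import Mathlib

section
/- Fix a strongly connected directed weighted graph G = (V, E, W) with n nodes, a stationary distribution π > 0, and ε > 0 such that P^ε_{G,π} is nonempty. Then the return time entropy J attains a global maximum on P^ε_{G,π}: there exists P* ∈ P^ε_{G,π} such that J(P*) ≥ J(P) for all P ∈ P^ε_{G,π}. -/
open scoped BigOperators
open Real

/-- The set of Markov chains `ε`-conforming to a directed graph with adjacency
relation `Adj` and stationary distribution `pivec`. -/
def Conf {n : ℕ} (Adj : Fin n → Fin n → Prop) (pivec : Fin n → ℝ) (ε : ℝ) :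
    Set (Matrix (Fin n) (Fin n) ℝ) :=
  {P | (∀ i j, Adj i j → ε ≤ P i j) ∧ (∀ i j, ¬ Adj i j → P i j = 0) ∧
    (∀ i, ∑ j, P i j = 1) ∧ (∀ j, ∑ i, pivec i * P i j = pivec j)}

/-- The first hitting time probabilities `F_k(i,j)` for a chain `P` with travel
times `W`: `F_k(i,j) = p_{ij}·1{k = w_{ij}} + Σ_{h≠j} p_{ih} F_{k−w_{ih}}(h,j)`
for `k ≥ 1`, and `F_k = 0` for `k ≤ 0`. -/
def IsHittingProb {n : ℕ} (P : Matrix (Fin n) (Fin n) ℝ)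
    (W : Matrix (Fin n) (Fin n) ℕ) (F : ℤ → Fin n → Fin n → ℝ) : Prop :=
  (∀ k : ℤ, k ≤ 0 → ∀ i j, F k i j = 0) ∧
    ∀ k : ℤ, 1 ≤ k → ∀ i j,
      F k i j = (if k = (W i j : ℤ) then P i j else 0) +
        ∑ h : Fin n, if h = j then 0 else P i h * F (k - (W i h : ℤ)) h j


theorem conf_nonneg {n : ℕ} {Adj : Fin n → Fin n → Prop} {pivec : Fin n → ℝ} {ε : ℝ}
    (hε : 0 < ε) {P : Matrix (Fin n) (Fin n) ℝ} (hP : P ∈ Conf Adj pivec ε) (i j : Fin n) :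
    0 ≤ P i j := by
  by_cases h : Adj i j
  · exact hε.le.trans (hP.1 i j h)
  · exact (hP.2.1 i j h).ge

theorem conf_le_one {n : ℕ} {Adj : Fin n → Fin n → Prop} {pivec : Fin n → ℝ} {ε : ℝ}
    (hε : 0 < ε) {P : Matrix (Fin n) (Fin n) ℝ} (hP : P ∈ Conf Adj pivec ε) (i j : Fin n) :
    P i j ≤ 1 := by
  rw [← hP.2.2.1 i]
  exact Finset.single_le_sum (f := fun j => P i j) (fun j _ => conf_nonneg hε hP i j)
    (Finset.mem_univ j)

theorem conf_compact {n : ℕ} (Adj : Fin n → Fin n → Prop) (pivec : Fin n → ℝ) {ε : ℝ}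
    (hε : 0 < ε) : IsCompact (Conf Adj pivec ε) := by
  have hK : IsCompact (Set.pi Set.univ (fun _ : Fin n => Set.pi Set.univ
      (fun _ : Fin n => Set.Icc (0:ℝ) 1))) :=
    isCompact_univ_pi fun _ => isCompact_univ_pi fun _ => isCompact_Icc
  have hc : ∀ i j, Continuous (fun P : Matrix (Fin n) (Fin n) ℝ => P i j) := fun i j => by
    fun_prop
  refine IsCompact.of_isClosed_subset (X := Matrix (Fin n) (Fin n) ℝ) hK ?_ ?_
  · unfold Conf
    simp only [Set.setOf_and, Set.setOf_forall]
    refine IsClosed.inter ?_ (IsClosed.inter ?_ (IsClosed.inter ?_ ?_))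
    · exact isClosed_iInter fun i => isClosed_iInter fun j => isClosed_iInter fun _ =>
        isClosed_le continuous_const (hc i j)
    · exact isClosed_iInter fun i => isClosed_iInter fun j => isClosed_iInter fun _ =>
        isClosed_eq (hc i j) continuous_const
    · exact isClosed_iInter fun i =>
        isClosed_eq (continuous_finsetSum _ fun j _ => hc i j) continuous_const
    · exact isClosed_iInter fun j =>
        isClosed_eq (continuous_finsetSum _ fun i _ => continuous_const.mul (hc i j))
          continuous_const
  · intro P hP i _ j _
    exact ⟨conf_nonneg hε hP i j, conf_le_one hε hP i j⟩

theorem hit_bounds {n : ℕ} {Adj : Fin n → Fin n → Prop} {W : Matrix (Fin n) (Fin n) ℕ}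
    {pivec : Fin n → ℝ} {ε : ℝ} (hW1 : ∀ i j, Adj i j → 1 ≤ W i j)
    (hε : 0 < ε) {P : Matrix (Fin n) (Fin n) ℝ} (hP : P ∈ Conf Adj pivec ε)
    {F : ℤ → Fin n → Fin n → ℝ} (hF : IsHittingProb P W F) (j : Fin n)
    (x : ℝ) (hx : 0 < x) (v : Fin n → ℝ) (hv : ∀ i, 0 ≤ v i)
    (hdrift : ∀ i, ∑ h, P i h * (x ^ (W i h) * (if h = j then 1 else v h)) ≤ v i) (k : ℕ) :
    ∀ i, 0 ≤ F k i j ∧ F k i j * x ^ k ≤ v i := by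
  induction k using Nat.strong_induction_on with
  | _ k ih =>
  intro i
  rcases Nat.eq_zero_or_pos k with rfl | hk
  · rw [hF.1 _ (by simp)]
    simp [hv]
  have key : ∀ h, 0 ≤ (if h = j then 0 else P i h * F (k - (W i h : ℤ)) h j) ∧
      (if h = j then (if (k:ℤ) = (W i h : ℤ) then P i h else 0)
        else P i h * F (k - (W i h : ℤ)) h j) * x ^ k ≤
      P i h * (x ^ (W i h) * (if h = j then 1 else v h)) := by
    intro h
    have hp := conf_nonneg hε hP i h
    by_cases hj : h = j
    · simp only [hj, if_true]
      refine ⟨le_rfl, ?_⟩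
      rw [hj] at hp
      split_ifs with hkw
      · have : k = W i j := by exact_mod_cast hkw
        rw [this]; simp
      · simp; positivity
    · simp only [hj, if_false]
      by_cases hA : Adj i h
      · by_cases hkw : W i h ≤ k
        · obtain ⟨m, rfl⟩ := Nat.exists_eq_add_of_le hkw
          have hm : m < W i h + m := by have := hW1 i h hA; omega
          obtain ⟨h1, h2⟩ := ih m hm h
          have e : ((W i h + m : ℕ) : ℤ) - (W i h : ℤ) = (m : ℤ) := by push_cast; ring
          rw [e]
          refine ⟨mul_nonneg hp h1, ?_⟩
          calc P i h * F m h j * x ^ (W i h + m) = P i h * (x ^ (W i h) * (F m h j * x ^ m)) := by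
                ring
            _ ≤ _ := by gcongr
        · rw [hF.1 _ (by omega)]
          have := hv h
          simp; positivity
      · rw [hP.2.1 i h hA]; simp
  have hrec := hF.2 k (by exact_mod_cast hk) i j
  constructor
  · rw [hrec]
    refine add_nonneg ?_ (Finset.sum_nonneg fun h _ => (key h).1)
    have := conf_nonneg hε hP i j
    split_ifs <;> simp [this]
  · refine le_trans (le_of_eq ?_) ((Finset.sum_le_sum fun h _ => (key h).2).trans (hdrift i))
    rw [hrec, ← Finset.sum_mul]
    congr 1
    have : (if (k:ℤ) = (W i j : ℤ) then P i j else 0) =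
        ∑ h, if h = j then (if (k:ℤ) = (W i h : ℤ) then P i h else 0) else 0 := by simp
    rw [this, ← Finset.sum_add_distrib]
    refine Finset.sum_congr rfl fun h _ => ?_
    by_cases hj : h = j <;> simp [hj]

theorem exists_level {n : ℕ} {Adj : Fin n → Fin n → Prop}
    (hconn : ∀ i j, Relation.ReflTransGen Adj i j) (j : Fin n) :
    ∃ d : Fin n → ℕ, d j = 0 ∧ ∀ i, i ≠ j → ∃ h, Adj i h ∧ d h + 1 ≤ d i := by
  classical
  obtain ⟨R, hR0, hRs⟩ : ∃ R : ℕ → Fin n → Prop, (∀ i, R 0 i ↔ i = j) ∧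
      ∀ m i, R (m + 1) i ↔ ∃ h, Adj i h ∧ R m h :=
    ⟨fun m => Nat.rec (motive := fun _ => Fin n → Prop) (fun i => i = j)
      (fun _ r i => ∃ h, Adj i h ∧ r h) m, fun _ => Iff.rfl, fun _ _ => Iff.rfl⟩
  have hR : ∀ i, ∃ m, R m i := by
    intro i
    induction hconn i j using Relation.ReflTransGen.head_induction_on with
    | refl => exact ⟨0, (hR0 _).2 rfl⟩
    | head h _ ih =>
      obtain ⟨m, hm⟩ := ih
      exact ⟨m + 1, (hRs _ _).2 ⟨_, h, hm⟩⟩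
  refine ⟨fun i => Nat.find (hR i), ?_, ?_⟩
  · simp only [Nat.find_eq_zero]; exact (hR0 j).2 rfl
  · intro i hi
    have hs := Nat.find_spec (hR i)
    rcases hd : Nat.find (hR i) with _ | m
    · rw [hd] at hs; exact absurd ((hR0 i).1 hs) hi
    · rw [hd] at hs
      obtain ⟨h, hA, hm⟩ := (hRs m i).1 hs
      refine ⟨h, hA, ?_⟩
      have := Nat.find_min' (hR h) hm
      simp only [hd]; omega

theorem hit_geom {n : ℕ} {Adj : Fin n → Fin n → Prop} {W : Matrix (Fin n) (Fin n) ℕ}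
    {pivec : Fin n → ℝ} {ε : ℝ} (hconn : ∀ i j, Relation.ReflTransGen Adj i j)
    (hW1 : ∀ i j, Adj i j → 1 ≤ W i j) (hε : 0 < ε)
    {F : Matrix (Fin n) (Fin n) ℝ → ℤ → Fin n → Fin n → ℝ}
    (hF : ∀ P ∈ Conf Adj pivec ε, IsHittingProb P W (F P)) (j : Fin n) :
    ∃ x : ℝ, 1 < x ∧ ∃ C : ℝ, 0 ≤ C ∧ ∀ P ∈ Conf Adj pivec ε, ∀ k : ℕ,
      F P k j j * x ^ k ≤ C := by
  obtain ⟨d, hd0, hd⟩ := exists_level hconn j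
  obtain ⟨η, hη0, hη1, hηε⟩ : ∃ η : ℝ, 0 < η ∧ η ≤ 1 ∧ 2 * η ≤ ε := by
    refine ⟨min ε 1 / 2, by positivity, ?_, ?_⟩
    · linarith [min_le_right ε 1]
    · linarith [min_le_left ε 1]
  obtain ⟨M, hM⟩ : ∃ M : ℕ, ∀ i h, W i h ≤ M :=
    ⟨∑ i, ∑ h, W i h, fun i h =>
      (Finset.single_le_sum (f := fun h => W i h) (fun _ _ => Nat.zero_le _)
        (Finset.mem_univ h)).trans
      (Finset.single_le_sum (f := fun i => ∑ h, W i h) (fun _ _ => Nat.zero_le _)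
        (Finset.mem_univ i))⟩
  obtain ⟨D, hD⟩ : ∃ D : ℕ, ∀ i, d i ≤ D :=
    ⟨∑ i, d i, fun i => Finset.single_le_sum (f := d) (fun _ _ => Nat.zero_le _)
        (Finset.mem_univ i)⟩
  have hc : 0 < η ^ D := by positivity
  obtain ⟨x, hx1, hxM⟩ : ∃ x : ℝ, 1 < x ∧ x ^ M < 1 + η ^ D / 2 := by
    have h1 : Filter.Tendsto (fun x : ℝ => x ^ M) (nhdsWithin 1 (Set.Ioi 1)) (nhds 1) := by
      have : Filter.Tendsto (fun x : ℝ => x ^ M) (nhds 1) (nhds (1 ^ M)) :=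
        (continuous_pow M).tendsto 1
      rw [one_pow] at this
      exact this.mono_left nhdsWithin_le_nhds
    have h2 := h1.eventually_lt_const (show (1:ℝ) < 1 + η ^ D / 2 by linarith)
    obtain ⟨x, hx, hx'⟩ := (h2.and self_mem_nhdsWithin).exists
    exact ⟨x, hx', hx⟩
  have hxM1 : 1 ≤ x ^ M := one_le_pow₀ hx1.le
  have hpow1 : ∀ i, η ^ d i ≤ 1 := fun i => pow_le_one₀ hη0.le hη1
  have hpow0 : ∀ i, 0 < η ^ d i := fun i => by positivity
  refine ⟨x, hx1, x ^ M * 2, by positivity, fun P hP k => ?_⟩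
  let v : Fin n → ℝ := fun i => if i = j then x ^ M * 2 else 2 - η ^ d i
  have hv : ∀ i, 0 ≤ v i := by
    intro i
    simp only [v]
    split_ifs
    · positivity
    · linarith [hpow1 i]
  have hdrift : ∀ i, ∑ h, P i h * (x ^ (W i h) * (if h = j then 1 else v h)) ≤ v i := by
    intro i
    have e1 : ∑ h, P i h * (x ^ (W i h) * (if h = j then 1 else v h)) ≤
        x ^ M * (2 - ∑ h, P i h * η ^ d h) := by
      have : x ^ M * (2 - ∑ h, P i h * η ^ d h) =
          ∑ h, P i h * (x ^ M * (2 - η ^ d h)) := by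
        have : (2:ℝ) = ∑ h, P i h * 2 := by rw [← Finset.sum_mul, hP.2.2.1 i]; ring
        rw [this, ← Finset.sum_sub_distrib, Finset.mul_sum, ← this]
        exact Finset.sum_congr rfl fun h _ => by ring
      rw [this]
      refine Finset.sum_le_sum fun h _ => mul_le_mul_of_nonneg_left ?_ (conf_nonneg hε hP i h)
      have e : (if h = j then 1 else v h) = 2 - η ^ d h := by
        by_cases hj : h = j
        · simp [hj, hd0]; norm_num
        · simp [hj, v]
      rw [e]
      refine mul_le_mul_of_nonneg_right (pow_le_pow_right₀ hx1.le (hM i h)) ?_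
      linarith [hpow1 h]
    refine e1.trans ?_
    by_cases hij : i = j
    · simp only [v, hij, if_true]
      refine mul_le_mul_of_nonneg_left ?_ (by positivity)
      have : 0 ≤ ∑ h, P j h * η ^ d h :=
        Finset.sum_nonneg fun h _ => mul_nonneg (conf_nonneg hε hP j h) (hpow0 h).le
      linarith
    · simp only [v, hij, if_false]
      obtain ⟨h, hA, hh⟩ := hd i hij
      have e2 : 2 * η ^ d i ≤ ∑ h, P i h * η ^ d h := by
        calc 2 * η ^ d i ≤ 2 * η ^ (d h + 1) := by
              have := pow_le_pow_of_le_one hη0.le hη1 hh; linarith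
          _ = (2 * η) * η ^ d h := by ring
          _ ≤ P i h * η ^ d h :=
              mul_le_mul_of_nonneg_right (hηε.trans (hP.1 i h hA)) (hpow0 h).le
          _ ≤ _ := Finset.single_le_sum (f := fun h => P i h * η ^ d h)
              (fun h _ => mul_nonneg (conf_nonneg hε hP i h) (hpow0 h).le) (Finset.mem_univ h)
      have e3 : η ^ D ≤ η ^ d i := pow_le_pow_of_le_one hη0.le hη1 (hD i)
      have := hpow1 i
      have := hpow0 i
      calc x ^ M * (2 - ∑ h, P i h * η ^ d h) ≤ x ^ M * (2 - 2 * η ^ d i) := by gcongr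
        _ ≤ (1 + η ^ d i / 2) * (2 - 2 * η ^ d i) := by
            refine mul_le_mul_of_nonneg_right ?_ (by linarith)
            linarith
        _ ≤ _ := by nlinarith
  have := (hit_bounds hW1 hε hP (hF P hP) j x (by linarith) v hv hdrift k j).2
  simpa [v] using this

theorem hit_cont {n : ℕ} {Adj : Fin n → Fin n → Prop} {W : Matrix (Fin n) (Fin n) ℕ}
    {pivec : Fin n → ℝ} {ε : ℝ}
    (hW1 : ∀ i j, Adj i j → 1 ≤ W i j)
    {F : Matrix (Fin n) (Fin n) ℝ → ℤ → Fin n → Fin n → ℝ}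
    (hF : ∀ P ∈ Conf Adj pivec ε, IsHittingProb P W (F P)) (j : Fin n) (k : ℕ) :
    ∀ i, ContinuousOn (fun P => F P k i j) (Conf Adj pivec ε) := by
  induction k using Nat.strong_induction_on with
  | _ k ih =>
  intro i
  have hc : ∀ i j, Continuous (fun P : Matrix (Fin n) (Fin n) ℝ => P i j) := fun i j => by
    fun_prop
  have h0 : ∀ m : ℤ, m ≤ 0 → ∀ i, ContinuousOn (fun P => F P m i j) (Conf Adj pivec ε) :=
    fun m hm i => (continuousOn_const (c := (0:ℝ))).congr fun P hP => (hF P hP).1 m hm i j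
  rcases Nat.eq_zero_or_pos k with rfl | hk
  · exact h0 _ (by simp) i
  refine ContinuousOn.congr ?_ (fun P hP => (hF P hP).2 k (by exact_mod_cast hk) i j)
  refine ContinuousOn.add ?_ (continuousOn_finsetSum _ fun h _ => ?_)
  · split_ifs
    · exact (hc i j).continuousOn
    · exact continuousOn_const
  · split_ifs
    · exact continuousOn_const
    · by_cases hA : Adj i h
      · refine (hc i h).continuousOn.mul ?_
        by_cases hkw : W i h ≤ k
        · have e : ((k : ℕ) : ℤ) - (W i h : ℤ) = ((k - W i h : ℕ) : ℤ) := by omega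
          rw [e]
          exact ih _ (by have := hW1 i h hA; omega) h
        · exact h0 _ (by omega) h
      · refine (continuousOn_const (c := (0:ℝ))).congr fun P hP => ?_
        simp [hP.2.1 i h hA]

theorem negMulLog_le_sqrt {y : ℝ} (h0 : 0 ≤ y) : Real.negMulLog y ≤ 2 * √y := by
  rcases h0.eq_or_lt with rfl | hy
  · simp
  have hs : 0 < √y := Real.sqrt_pos.2 hy
  have h1 : Real.log y = 2 * Real.log (√y) := by rw [Real.log_sqrt h0]; ring
  have h2 := Real.one_sub_inv_le_log_of_pos hs
  have h3 : y = √y * √y := (Real.mul_self_sqrt h0).symm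
  have h4 : √y * (√y)⁻¹ = 1 := mul_inv_cancel₀ hs.ne'
  rw [Real.negMulLog, h1]
  have h5 : √y * (1 - (√y)⁻¹) ≤ √y * Real.log (√y) := mul_le_mul_of_nonneg_left h2 hs.le
  have h6 : -1 ≤ √y * Real.log (√y) := by nlinarith
  have h7 : √y * (-1) ≤ √y * (√y * Real.log (√y)) := mul_le_mul_of_nonneg_left h6 hs.le
  have h8 : y * Real.log (√y) = √y * (√y * Real.log (√y)) := by
    rw [← mul_assoc, ← h3]
  linarith

/-- the return time entropy
`J(P) = Σ_i π_i (−Σ_{k≥1} F_k(i,i) log F_k(i,i))` attains a global maximum on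
the `ε`-conforming set. -/
theorem return_time_entropy_attains_maximum {n : ℕ}
    (Adj : Fin n → Fin n → Prop) (W : Matrix (Fin n) (Fin n) ℕ)
    (pivec : Fin n → ℝ) (ε : ℝ)
    (hconn : ∀ i j, Relation.ReflTransGen Adj i j)
    (hW1 : ∀ i j, Adj i j → 1 ≤ W i j)
    (hW0 : ∀ i j, ¬ Adj i j → W i j = 0)
    (hpi : ∀ i, 0 < pivec i) (hpisum : ∑ i, pivec i = 1)
    (hε : 0 < ε) (hne : (Conf Adj pivec ε).Nonempty)
    (F : Matrix (Fin n) (Fin n) ℝ → ℤ → Fin n → Fin n → ℝ)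
    (hF : ∀ P ∈ Conf Adj pivec ε, IsHittingProb P W (F P)) :
    ∃ Pstar ∈ Conf Adj pivec ε,
      ∀ P ∈ Conf Adj pivec ε,
        (∑ i : Fin n, pivec i * ∑' k : ℕ, Real.negMulLog (F P ((k : ℤ) + 1) i i)) ≤
          ∑ i : Fin n, pivec i * ∑' k : ℕ, Real.negMulLog (F Pstar ((k : ℤ) + 1) i i) := by
  have hcont : ContinuousOn (fun P => ∑ i : Fin n, pivec i *
      ∑' k : ℕ, Real.negMulLog (F P ((k : ℤ) + 1) i i)) (Conf Adj pivec ε) := by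
    refine continuousOn_finsetSum _ fun i _ => continuousOn_const.mul ?_
    obtain ⟨x, hx1, C, hC, hb⟩ := hit_geom hconn hW1 hε hF i
    have hx0 : 0 < x := by linarith
    have hsx : 1 < √x := by rw [Real.lt_sqrt (by norm_num)]; simpa using hx1
    have hsum : Summable (fun k : ℕ => 2 * √C * ((√x)⁻¹) ^ (k + 1)) := by
      refine Summable.mul_left _ ?_
      exact (summable_nat_add_iff 1).2
        (summable_geometric_of_lt_one (by positivity) (inv_lt_one_of_one_lt₀ hsx))
    refine continuousOn_tsum (fun k => ?_) hsum ?_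
    · have := hit_cont hW1 hF i (k + 1) i
      push_cast at this
      exact Real.continuous_negMulLog.comp_continuousOn this
    · intro k P hP
      have h1 := hit_bounds hW1 hε hP (hF P hP) i 1 one_pos (fun _ => 1) (fun _ => zero_le_one)
        (fun a => by simp [hP.2.2.1 a]) (k + 1) i
      have h2 := hb P hP (k + 1)
      push_cast at h1 h2
      simp only [one_pow, mul_one] at h1
      rw [Real.norm_of_nonneg (Real.negMulLog_nonneg h1.1 h1.2)]
      refine (negMulLog_le_sqrt h1.1).trans ?_
      have h3 : F P (k + 1) i i ≤ C * (x⁻¹) ^ (k + 1) := by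
        rw [inv_pow, ← div_eq_mul_inv, le_div_iff₀ (by positivity)]
        exact h2
      have h4 : √(C * (x⁻¹) ^ (k + 1)) = √C * ((√x)⁻¹) ^ (k + 1) := by
        rw [Real.sqrt_mul hC, ← Real.sqrt_inv]
        congr 1
        rw [Real.sqrt_eq_iff_mul_self_eq (by positivity) (by positivity), ← mul_pow,
          Real.mul_self_sqrt (by positivity)]
      have := Real.sqrt_le_sqrt h3
      rw [h4] at this
      linarith
  obtain ⟨Q, hQ, hmax⟩ := (conf_compact Adj pivec hε).exists_isMaxOn hne hcont
  exact ⟨Q, hQ, fun P hP => hmax hP⟩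
end

section
/- Let G be a strongly connected directed graph with n nodes and unitary travel times, π > 0 a stationary distribution, and ε > 0 such that P^ε_{G,π} is nonempty. Then for every P ∈ P^ε_{G,π}, the return time entropy J(P) and the entropy rate H_rate(P) = −Σ_{i=1}^n π_i Σ_{j=1}^n p_{ij} log p_{ij} satisfy H_rate(P) ≤ J(P) ≤ n·H_rate(P). -/
open scoped BigOperators
open Real

/-- First hitting time probabilities for unitary travel times:
`F_1 = P` and `F_k(i,j) = Σ_{h≠j} p_{ih} F_{k−1}(h,j)` for `k ≥ 2`. -/
def IsHittingProbUnit {n : ℕ} (P : Matrix (Fin n) (Fin n) ℝ)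
    (F : ℕ → Fin n → Fin n → ℝ) : Prop :=
  (∀ i j, F 1 i j = P i j) ∧
    ∀ k : ℕ, 2 ≤ k → ∀ i j,
      F k i j = ∑ h : Fin n, if h = j then 0 else P i h * F (k - 1) h j

/-- The entropy rate `H_rate(P) = −Σ_i π_i Σ_j p_{ij} log p_{ij}`. -/
noncomputable def entropyRate {n : ℕ} (pivec : Fin n → ℝ)
    (P : Matrix (Fin n) (Fin n) ℝ) : ℝ :=
  ∑ i : Fin n, pivec i * ∑ j : Fin n, Real.negMulLog (P i j)

open Finset Filter Topology

lemma aux_P_le_one {n : ℕ} {P : Matrix (Fin n) (Fin n) ℝ} (h0 : ∀ i j, 0 ≤ P i j)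
    (h1 : ∀ i, ∑ j, P i j = 1) (i j : Fin n) : P i j ≤ 1 := by
  rw [← h1 i]
  exact Finset.single_le_sum (f := fun j => P i j) (fun k _ => h0 i k) (Finset.mem_univ j)

lemma aux_F_succ {n : ℕ} {P : Matrix (Fin n) (Fin n) ℝ} {F : ℕ → Fin n → Fin n → ℝ}
    (hF : IsHittingProbUnit P F) (k : ℕ) (i j : Fin n) :
    F (k + 2) i j = ∑ h ∈ univ.erase j, P i h * F (k + 1) h j := by
  rw [hF.2 (k + 2) (by omega) i j, ← Finset.add_sum_erase univ _ (Finset.mem_univ j)]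
  simp only [if_true, zero_add]
  refine Finset.sum_congr rfl fun h hh => ?_
  rw [if_neg (Finset.ne_of_mem_erase hh)]
  rfl

lemma aux_F_nonneg {n : ℕ} {P : Matrix (Fin n) (Fin n) ℝ} {F : ℕ → Fin n → Fin n → ℝ}
    (h0 : ∀ i j, 0 ≤ P i j) (hF : IsHittingProbUnit P F) (k : ℕ) :
    ∀ i j : Fin n, 0 ≤ F (k + 1) i j := by
  induction k with
  | zero => intro i j; rw [zero_add, hF.1]; exact h0 i j
  | succ k ih =>
    intro i j
    rw [aux_F_succ hF]
    exact Finset.sum_nonneg fun h _ => mul_nonneg (h0 i h) (ih h j)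

lemma aux_F_sum {n : ℕ} {P : Matrix (Fin n) (Fin n) ℝ} {F : ℕ → Fin n → Fin n → ℝ}
    (h0 : ∀ i j, 0 ≤ P i j) (h1 : ∀ i, ∑ j, P i j = 1)
    (hF : IsHittingProbUnit P F) (j : Fin n) (K : ℕ) :
    ∀ i : Fin n, ∑ k ∈ range K, F (k + 1) i j ≤ 1 := by
  induction K with
  | zero => intro i; simp
  | succ K ih =>
    intro i
    rw [Finset.sum_range_succ', zero_add, hF.1]
    simp_rw [aux_F_succ hF]
    rw [Finset.sum_comm]
    simp_rw [← Finset.mul_sum]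
    rw [← h1 i, ← Finset.sum_erase_add univ _ (Finset.mem_univ j)]
    gcongr with h hh
    exact mul_le_of_le_one_right (h0 i h) (ih h)

lemma aux_F_le_one {n : ℕ} {P : Matrix (Fin n) (Fin n) ℝ} {F : ℕ → Fin n → Fin n → ℝ}
    (h0 : ∀ i j, 0 ≤ P i j) (h1 : ∀ i, ∑ j, P i j = 1)
    (hF : IsHittingProbUnit P F) (k : ℕ) (i j : Fin n) : F (k + 1) i j ≤ 1 :=
  (Finset.single_le_sum (f := fun k => F (k + 1) i j)
    (fun k _ => aux_F_nonneg h0 hF k i j) (Finset.mem_range.2 (Nat.lt_succ_self k))).trans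
    (aux_F_sum h0 h1 hF j (k + 1) i)

lemma aux_negMulLog_sum {ι : Type*} (s : Finset ι) (a : ι → ℝ) (ha : ∀ i ∈ s, 0 ≤ a i) :
    negMulLog (∑ i ∈ s, a i) ≤ ∑ i ∈ s, negMulLog (a i) := by
  have : negMulLog (∑ i ∈ s, a i) = ∑ i ∈ s, -(a i * Real.log (∑ i ∈ s, a i)) := by
    rw [negMulLog, Finset.sum_neg_distrib, neg_mul, ← Finset.sum_mul]
  rw [this]
  refine Finset.sum_le_sum fun i hi => ?_
  rw [negMulLog, neg_mul, neg_le_neg_iff]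
  rcases (ha i hi).eq_or_lt with h | h
  · rw [← h]; simp
  · exact mul_le_mul_of_nonneg_left
      (Real.log_le_log h (Finset.single_le_sum ha hi)) h.le

/-- Partial sums of the hitting time entropy. -/
lemma aux_S_succ {n : ℕ} {P : Matrix (Fin n) (Fin n) ℝ} {F : ℕ → Fin n → Fin n → ℝ}
    (h0 : ∀ i j, 0 ≤ P i j) (h1 : ∀ i, ∑ j, P i j = 1)
    (hF : IsHittingProbUnit P F) (i j : Fin n) (K : ℕ) :
    ∑ k ∈ range (K + 1), negMulLog (F (k + 1) i j) ≤
      ∑ h, negMulLog (P i h) +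
        ∑ h ∈ univ.erase j, P i h * ∑ k ∈ range K, negMulLog (F (k + 1) h j) := by
  rw [Finset.sum_range_succ', zero_add, hF.1]
  have step : ∀ k, negMulLog (F (k + 1 + 1) i j) ≤
      ∑ h ∈ univ.erase j, (F (k + 1) h j * negMulLog (P i h) + P i h * negMulLog (F (k + 1) h j)) := by
    intro k
    rw [aux_F_succ hF]
    refine (aux_negMulLog_sum _ _ fun h _ => mul_nonneg (h0 i h) (aux_F_nonneg h0 hF k h j)).trans ?_
    simp_rw [negMulLog_mul]
    rfl
  calc _ ≤ ∑ k ∈ range K, ∑ h ∈ univ.erase j,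
        (F (k + 1) h j * negMulLog (P i h) + P i h * negMulLog (F (k + 1) h j))
          + negMulLog (P i j) := by
        gcongr with k hk
        exact step k
    _ = ∑ h ∈ univ.erase j, (∑ k ∈ range K, F (k + 1) h j) * negMulLog (P i h) + negMulLog (P i j)
        + ∑ h ∈ univ.erase j, P i h * ∑ k ∈ range K, negMulLog (F (k + 1) h j) := by
        rw [Finset.sum_comm]
        simp_rw [Finset.sum_add_distrib, Finset.sum_mul, Finset.mul_sum]
        ring
    _ ≤ _ := by
        rw [← Finset.sum_erase_add univ _ (Finset.mem_univ j)]
        gcongr with h hh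
        exact mul_le_of_le_one_left
          (negMulLog_nonneg (h0 i h) (aux_P_le_one h0 h1 i h)) (aux_F_sum h0 h1 hF j K h)

lemma aux_upper {n : ℕ} {P : Matrix (Fin n) (Fin n) ℝ} {F : ℕ → Fin n → Fin n → ℝ}
    {p : Fin n → ℝ} (hp : ∀ i, 0 < p i) (hst : ∀ j, ∑ i, p i * P i j = p j)
    (h0 : ∀ i j, 0 ≤ P i j) (h1 : ∀ i, ∑ j, P i j = 1)
    (hF : IsHittingProbUnit P F) (j : Fin n) (K : ℕ) :
    p j * ∑ k ∈ range K, negMulLog (F (k + 1) j j) ≤ entropyRate p P := by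
  have hnn : ∀ k i, 0 ≤ negMulLog (F (k + 1) i j) := fun k i =>
    negMulLog_nonneg (aux_F_nonneg h0 hF k i j) (aux_F_le_one h0 h1 hF k i j)
  have hmono : ∀ i, ∑ k ∈ range K, negMulLog (F (k + 1) i j) ≤
      ∑ k ∈ range (K + 1), negMulLog (F (k + 1) i j) := fun i => by
    rw [Finset.sum_range_succ]; linarith [hnn K i]
  have key : ∑ i, p i * ∑ k ∈ range (K + 1), negMulLog (F (k + 1) i j) ≤
      entropyRate p P + ∑ h ∈ univ.erase j, p h * ∑ k ∈ range K, negMulLog (F (k + 1) h j) := by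
    calc _ ≤ ∑ i, p i * (∑ h, negMulLog (P i h) +
        ∑ h ∈ univ.erase j, P i h * ∑ k ∈ range K, negMulLog (F (k + 1) h j)) :=
          Finset.sum_le_sum fun i _ =>
            mul_le_mul_of_nonneg_left (aux_S_succ h0 h1 hF i j K) (hp i).le
      _ = _ := by
        simp_rw [mul_add, Finset.sum_add_distrib]
        rw [entropyRate]
        congr 1
        conv_lhs => enter [2, i]; rw [Finset.mul_sum]
        rw [Finset.sum_comm]
        refine Finset.sum_congr rfl fun h _ => ?_
        conv_rhs => rw [← hst h, Finset.sum_mul]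
        exact Finset.sum_congr rfl fun i _ => (mul_assoc _ _ _).symm
  rw [← Finset.sum_erase_add univ _ (Finset.mem_univ j)] at key
  have h2 : ∑ h ∈ univ.erase j, p h * ∑ k ∈ range K, negMulLog (F (k + 1) h j) ≤
      ∑ h ∈ univ.erase j, p h * ∑ k ∈ range (K + 1), negMulLog (F (k + 1) h j) :=
    Finset.sum_le_sum fun h _ => mul_le_mul_of_nonneg_left (hmono h) (hp h).le
  have h3 := mul_le_mul_of_nonneg_left (hmono j) (hp j).le
  linarith

lemma aux_summable {n : ℕ} {P : Matrix (Fin n) (Fin n) ℝ} {F : ℕ → Fin n → Fin n → ℝ}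
    {p : Fin n → ℝ} (hp : ∀ i, 0 < p i) (hst : ∀ j, ∑ i, p i * P i j = p j)
    (h0 : ∀ i j, 0 ≤ P i j) (h1 : ∀ i, ∑ j, P i j = 1)
    (hF : IsHittingProbUnit P F) (j : Fin n) :
    Summable fun k => negMulLog (F (k + 1) j j) := by
  refine summable_of_sum_range_le (c := entropyRate p P / p j) (fun k =>
    negMulLog_nonneg (aux_F_nonneg h0 hF k j j) (aux_F_le_one h0 h1 hF k j j)) fun K => ?_
  rw [le_div_iff₀' (hp j)]
  exact aux_upper hp hst h0 h1 hF j K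

/-- Taboo distribution: start at `j`, never return to `j`. -/
def auxNu {n : ℕ} (P : Matrix (Fin n) (Fin n) ℝ) (j : Fin n) : ℕ → Fin n → ℝ
  | 0 => fun i => if i = j then 1 else 0
  | k + 1 => fun h => if h = j then 0 else ∑ i, auxNu P j k i * P i h

lemma auxNu_nonneg {n : ℕ} {P : Matrix (Fin n) (Fin n) ℝ} (h0 : ∀ i j, 0 ≤ P i j)
    (j : Fin n) (k : ℕ) : ∀ i, 0 ≤ auxNu P j k i := by
  induction k with
  | zero => intro i; simp only [auxNu]; split_ifs <;> norm_num
  | succ k ih =>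
    intro h; simp only [auxNu]; split_ifs
    · exact le_rfl
    · exact Finset.sum_nonneg fun i _ => mul_nonneg (ih i) (h0 i h)

lemma auxNu_sum {n : ℕ} {P : Matrix (Fin n) (Fin n) ℝ} (h0 : ∀ i j, 0 ≤ P i j)
    (h1 : ∀ i, ∑ j, P i j = 1) (j : Fin n) (k : ℕ) : ∑ i, auxNu P j k i ≤ 1 := by
  induction k with
  | zero => simp [auxNu]
  | succ k ih =>
    calc ∑ h, auxNu P j (k + 1) h ≤ ∑ h, ∑ i, auxNu P j k i * P i h := by
          refine Finset.sum_le_sum fun h _ => ?_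
          have : 0 ≤ ∑ i, auxNu P j k i * P i h :=
            Finset.sum_nonneg fun i _ => mul_nonneg (auxNu_nonneg h0 j k i) (h0 i h)
          simp only [auxNu]; split_ifs
          · exact this
          · exact le_rfl
      _ = ∑ i, auxNu P j k i := by
          rw [Finset.sum_comm]
          simp_rw [← Finset.mul_sum, h1, mul_one]
      _ ≤ 1 := ih

lemma auxNu_F {n : ℕ} {P : Matrix (Fin n) (Fin n) ℝ} {F : ℕ → Fin n → Fin n → ℝ}
    (hF : IsHittingProbUnit P F) (j : Fin n) (a : ℕ) :
    ∀ b, ∑ i, auxNu P j a i * F (b + 1) i j = F (a + b + 1) j j := by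
  induction a with
  | zero => intro b; simp [auxNu]
  | succ a ih =>
    intro b
    have e : a + 1 + b + 1 = a + (b + 1) + 1 := by ring
    rw [e, ← ih (b + 1), ← Finset.add_sum_erase univ _ (Finset.mem_univ j)]
    have hj : auxNu P j (a + 1) j = 0 := by simp [auxNu]
    rw [hj, zero_mul, zero_add]
    simp_rw [aux_F_succ hF, Finset.mul_sum]
    rw [Finset.sum_comm]
    refine Finset.sum_congr rfl fun h hh => ?_
    simp only [auxNu, if_neg (Finset.ne_of_mem_erase hh)]
    rw [Finset.sum_mul]
    exact Finset.sum_congr rfl fun i _ => mul_assoc _ _ _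

lemma aux_jensen {n : ℕ} (v q : Fin n → ℝ) (hv : ∀ i, 0 ≤ v i) (hv1 : ∑ i, v i ≤ 1)
    (hq : ∀ i, 0 ≤ q i) :
    ∑ i, v i * negMulLog (q i) ≤ negMulLog (∑ i, v i * q i) := by
  set f := ∑ i, v i * q i with hf
  have hnn : ∀ i ∈ univ, 0 ≤ v i * q i := fun i _ => mul_nonneg (hv i) (hq i)
  have hf0 : 0 ≤ f := Finset.sum_nonneg hnn
  rcases hf0.eq_or_lt with h | h
  · rw [← h, negMulLog_zero]
    refine (Finset.sum_eq_zero fun i hi => ?_).le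
    have := (Finset.sum_eq_zero_iff_of_nonneg hnn).1 h.symm i hi
    rw [negMulLog, neg_mul, mul_neg, ← mul_assoc, this]; simp
  · have key : ∀ i, negMulLog (q i) ≤ - (q i * Real.log f) + (f - q i) := by
      intro i
      rcases (hq i).eq_or_lt with h' | h'
      · rw [← h']; simp [h.le]
      · have := Real.log_le_sub_one_of_pos (div_pos h h')
        rw [Real.log_div h.ne' h'.ne'] at this
        have h2 := mul_le_mul_of_nonneg_left this h'.le
        have h3 : q i * (f / q i - 1) = f - q i := by field_simp
        rw [negMulLog]
        linarith
    calc _ ≤ ∑ i, v i * (- (q i * Real.log f) + (f - q i)) :=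
          Finset.sum_le_sum fun i _ => mul_le_mul_of_nonneg_left (key i) (hv i)
      _ = - (f * Real.log f) + ((∑ i, v i) * f - f) := by
          conv_rhs => enter [2, 2]; rw [hf]
          rw [hf, Finset.sum_mul, Finset.sum_mul, ← Finset.sum_neg_distrib,
            ← Finset.sum_sub_distrib, ← Finset.sum_add_distrib]
          exact Finset.sum_congr rfl fun i _ => by ring
      _ ≤ _ := by
          rw [negMulLog]
          have := mul_le_mul_of_nonneg_right hv1 hf0
          linarith

/-- Remainder of the cycle formula. -/
def auxR {n : ℕ} (P : Matrix (Fin n) (Fin n) ℝ) (p : Fin n → ℝ) (j : Fin n) (K : ℕ)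
    (i : Fin n) : ℝ := p i - p j * ∑ a ∈ range (K + 1), auxNu P j a i

lemma auxR_j {n : ℕ} (P : Matrix (Fin n) (Fin n) ℝ) (p : Fin n → ℝ) (j : Fin n) (K : ℕ) :
    auxR P p j K j = 0 := by
  rw [auxR, Finset.sum_range_succ']
  simp [auxNu]

lemma auxR_succ {n : ℕ} {P : Matrix (Fin n) (Fin n) ℝ} {p : Fin n → ℝ}
    (hst : ∀ j, ∑ i, p i * P i j = p j) (j : Fin n) (K : ℕ) (h : Fin n) (hh : h ≠ j) :
    auxR P p j (K + 1) h = ∑ i, auxR P p j K i * P i h := by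
  simp only [auxR]
  rw [Finset.sum_range_succ']
  simp only [auxNu, if_neg hh, add_zero, sub_mul, Finset.sum_sub_distrib, hst]
  rw [Finset.sum_comm]
  simp_rw [mul_assoc, ← Finset.mul_sum, Finset.sum_mul]

lemma auxR_nonneg {n : ℕ} {P : Matrix (Fin n) (Fin n) ℝ} {p : Fin n → ℝ}
    (hp : ∀ i, 0 < p i) (h0 : ∀ i j, 0 ≤ P i j)
    (hst : ∀ j, ∑ i, p i * P i j = p j) (j : Fin n) (K : ℕ) :
    ∀ i, 0 ≤ auxR P p j K i := by
  induction K with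
  | zero =>
    intro i
    by_cases h : i = j
    · rw [h, auxR_j]
    · simp [auxR, auxNu, h, (hp i).le]
  | succ K ih =>
    intro i
    by_cases h : i = j
    · rw [h, auxR_j]
    · rw [auxR_succ hst j K i h]
      exact Finset.sum_nonneg fun k _ => mul_nonneg (ih k) (h0 k i)

lemma auxR_tendsto {n : ℕ} {Adj : Fin n → Fin n → Prop} {P : Matrix (Fin n) (Fin n) ℝ}
    {p : Fin n → ℝ} (hconn : ∀ i j, Relation.ReflTransGen Adj i j)
    (hadj : ∀ i j, Adj i j → 0 < P i j)
    (hp : ∀ i, 0 < p i) (h0 : ∀ i j, 0 ≤ P i j) (h1 : ∀ i, ∑ j, P i j = 1)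
    (hst : ∀ j, ∑ i, p i * P i j = p j) (j : Fin n) (i : Fin n) :
    Tendsto (fun K => auxR P p j K i) atTop (𝓝 0) := by
  have hanti : ∀ i, Antitone fun K => auxR P p j K i := fun i =>
    antitone_nat_of_succ_le fun K => by
      simp only [auxR]
      rw [Finset.sum_range_succ _ (K + 1)]
      have := mul_nonneg (hp j).le (auxNu_nonneg h0 j (K + 1) i)
      linarith
  have hlim : ∀ i, ∃ l, Tendsto (fun K => auxR P p j K i) atTop (𝓝 l) := fun i =>
    ⟨_, tendsto_atTop_ciInf (hanti i)
      ⟨0, by rintro _ ⟨K, rfl⟩; exact auxR_nonneg hp h0 hst j K i⟩⟩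
  choose r hr using hlim
  have hr0 : ∀ i, 0 ≤ r i := fun i =>
    ge_of_tendsto' (hr i) fun K => auxR_nonneg hp h0 hst j K i
  have hrj : r j = 0 := by
    refine tendsto_nhds_unique (hr j) ?_
    simp only [auxR_j]
    exact tendsto_const_nhds
  have hrec : ∀ h, h ≠ j → r h = ∑ i, r i * P i h := by
    intro h hh
    have t1 := (tendsto_add_atTop_iff_nat 1).2 (hr h)
    have t2 : Tendsto (fun K => ∑ i, auxR P p j K i * P i h) atTop (𝓝 (∑ i, r i * P i h)) :=
      tendsto_finsetSum _ fun i _ => (hr i).mul_const _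
    refine tendsto_nhds_unique t1 (t2.congr fun K => ?_)
    rw [auxR_succ hst j K h hh]
  have hcol : ∑ i, r i * P i j = 0 := by
    have e1 : ∑ h, ∑ i, r i * P i h = ∑ i, r i := by
      rw [Finset.sum_comm]; simp_rw [← Finset.mul_sum, h1, mul_one]
    rw [← Finset.sum_erase_add univ _ (Finset.mem_univ j)] at e1
    rw [← Finset.sum_erase_add univ (fun i => r i) (Finset.mem_univ j)] at e1
    have e2 : ∑ h ∈ univ.erase j, ∑ i, r i * P i h = ∑ h ∈ univ.erase j, r h :=
      Finset.sum_congr rfl fun h hh => (hrec h (Finset.ne_of_mem_erase hh)).symm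
    rw [e2, hrj] at e1
    linarith
  have hrec' : ∀ h, r h = ∑ i, r i * P i h := fun h => by
    by_cases hh : h = j
    · rw [hh, hcol, hrj]
    · exact hrec h hh
  have hpos : ∀ a b, Relation.ReflTransGen Adj a b → 0 < r a → 0 < r b := by
    intro a b hab ha
    induction hab with
    | refl => exact ha
    | tail _ hbc ih =>
      rename_i b c _
      rw [hrec' c]
      exact (mul_pos ih (hadj b c hbc)).trans_le (Finset.single_le_sum
        (f := fun i => r i * P i c) (fun i _ => mul_nonneg (hr0 i) (h0 i c)) (Finset.mem_univ b))
  have : r i = 0 := by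
    by_contra hne
    have := hpos i j (hconn i j) (lt_of_le_of_ne (hr0 i) (Ne.symm hne))
    rw [hrj] at this
    exact lt_irrefl _ this
  rw [← this]
  exact hr i

lemma aux_lower {n : ℕ} {Adj : Fin n → Fin n → Prop} {P : Matrix (Fin n) (Fin n) ℝ}
    {F : ℕ → Fin n → Fin n → ℝ}
    {p : Fin n → ℝ} (hconn : ∀ i j, Relation.ReflTransGen Adj i j)
    (hadj : ∀ i j, Adj i j → 0 < P i j)
    (hp : ∀ i, 0 < p i) (h0 : ∀ i j, 0 ≤ P i j) (h1 : ∀ i, ∑ j, P i j = 1)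
    (hst : ∀ j, ∑ i, p i * P i j = p j) (hF : IsHittingProbUnit P F) (j : Fin n) :
    ∑ i, p i * negMulLog (P i j) ≤ p j * ∑' k, negMulLog (F (k + 1) j j) := by
  have hs := aux_summable hp hst h0 h1 hF j
  have hstep : ∀ a, ∑ i, auxNu P j a i * negMulLog (P i j) ≤ negMulLog (F (a + 1) j j) := by
    intro a
    have := auxNu_F hF j a 0
    simp only [zero_add, add_zero, hF.1] at this
    rw [← this]
    exact aux_jensen _ _ (auxNu_nonneg h0 j a) (auxNu_sum h0 h1 j a) fun i => h0 i j
  have hK : ∀ K, ∑ i, p i * negMulLog (P i j) ≤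
      ∑ i, auxR P p j K i * negMulLog (P i j) + p j * ∑' k, negMulLog (F (k + 1) j j) := by
    intro K
    have e : ∑ i, p i * negMulLog (P i j) = ∑ i, auxR P p j K i * negMulLog (P i j) +
        p j * ∑ a ∈ range (K + 1), ∑ i, auxNu P j a i * negMulLog (P i j) := by
      rw [Finset.sum_comm, Finset.mul_sum, ← Finset.sum_add_distrib]
      refine Finset.sum_congr rfl fun i _ => ?_
      rw [auxR, ← Finset.sum_mul]
      ring
    rw [e]
    gcongr
    · exact (hp j).le
    · refine (Finset.sum_le_sum fun a _ => hstep a).trans ?_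
      exact hs.sum_le_tsum _ fun k _ =>
        negMulLog_nonneg (aux_F_nonneg h0 hF k j j) (aux_F_le_one h0 h1 hF k j j)
  have ht : Tendsto (fun K => ∑ i, auxR P p j K i * negMulLog (P i j)
      + p j * ∑' k, negMulLog (F (k + 1) j j)) atTop
      (𝓝 (∑ i, 0 * negMulLog (P i j) + p j * ∑' k, negMulLog (F (k + 1) j j))) :=
    (tendsto_finsetSum _ fun i _ =>
      (auxR_tendsto hconn hadj hp h0 h1 hst j i).mul_const _).add_const _
  have := ge_of_tendsto' ht hK
  simpa using this

/-- for unitary travel times, the return time entropy `J(P)`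
and the entropy rate satisfy `H_rate(P) ≤ J(P) ≤ n·H_rate(P)` on the
`ε`-conforming set. -/
theorem return_time_entropy_vs_entropy_rate {n : ℕ}
    (Adj : Fin n → Fin n → Prop) (pivec : Fin n → ℝ) (ε : ℝ)
    (hconn : ∀ i j, Relation.ReflTransGen Adj i j)
    (hpi : ∀ i, 0 < pivec i) (hpisum : ∑ i, pivec i = 1)
    (hε : 0 < ε) (hne : (Conf Adj pivec ε).Nonempty)
    (F : Matrix (Fin n) (Fin n) ℝ → ℕ → Fin n → Fin n → ℝ)
    (hF : ∀ P ∈ Conf Adj pivec ε, IsHittingProbUnit P (F P)) :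
    ∀ P ∈ Conf Adj pivec ε,
      entropyRate pivec P ≤
          (∑ i : Fin n, pivec i * ∑' k : ℕ, Real.negMulLog (F P (k + 1) i i)) ∧
        (∑ i : Fin n, pivec i * ∑' k : ℕ, Real.negMulLog (F P (k + 1) i i)) ≤
          (n : ℝ) * entropyRate pivec P := by
  intro P hP
  have hFP := hF P hP
  obtain ⟨hA, hnA, h1, hst⟩ := hP
  have hadj : ∀ i j, Adj i j → 0 < P i j := fun i j h => hε.trans_le (hA i j h)
  have h0 : ∀ i j, 0 ≤ P i j := fun i j => by
    by_cases h : Adj i j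
    · exact (hadj i j h).le
    · exact (hnA i j h).ge
  constructor
  · calc entropyRate pivec P = ∑ j, ∑ i, pivec i * Real.negMulLog (P i j) := by
          rw [entropyRate, Finset.sum_comm]
          simp_rw [Finset.mul_sum]
      _ ≤ _ := Finset.sum_le_sum fun j _ => aux_lower hconn hadj hpi h0 h1 hst hFP j
  · calc _ ≤ ∑ _i : Fin n, entropyRate pivec P := by
          refine Finset.sum_le_sum fun j _ => ?_
          have hs := (aux_summable hpi hst h0 h1 hFP j).hasSum.tendsto_sum_nat.const_mul (pivec j)
          exact le_of_tendsto' hs fun K => aux_upper hpi hst h0 h1 hFP j K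
      _ = _ := by simp
end

section
/- Fix a strongly connected directed weighted graph G = (V, E, W) with n nodes, a stationary distribution π > 0, and ε > 0 such that P^ε_{G,π} is nonempty, and let c > 0 and λ_max ∈ (0,1) be constants such that F_k(i,i) ≤ c·λ_max^k for all P ∈ P^ε_{G,π}, all states i and all k ∈ ℤ_{>0}. If the truncation accuracy η ∈ (0,1) satisfies η ≤ w_max·log λ_max / ( π_min·(log λ_max − log c − 1) ), then for every P ∈ P^ε_{G,π}, 0 ≤ J(P) − J_trunc,η(P) ≤ c·log(1/λ_max)/(1 − λ_max)² · (1 + N_η)·λ_max^{N_η}, where N_η = ⌈w_max/(η·π_min)⌉ − 1. -/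
open scoped BigOperators
open Real

section aux
variable {n : ℕ} {P : Matrix (Fin n) (Fin n) ℝ} {W : Matrix (Fin n) (Fin n) ℕ}
  {F : ℤ → Fin n → Fin n → ℝ}

theorem aux_nonneg (hP : ∀ i j, 0 ≤ P i j) (hPW : ∀ i j, W i j = 0 → P i j = 0)
    (hF : IsHittingProb P W F) : ∀ (m : ℕ) (k : ℤ), k ≤ m → ∀ i j, 0 ≤ F k i j := by
  intro m
  induction m with
  | zero => intro k hk i j; exact (hF.1 k (by simpa using hk) i j).ge
  | succ m ih =>
    intro k hk i j
    by_cases hk0 : k ≤ 0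
    · exact (hF.1 k hk0 i j).ge
    rw [hF.2 k (by omega) i j]
    refine add_nonneg ?_ (Finset.sum_nonneg fun h _ => ?_)
    · split_ifs
      · exact hP i j
      · exact le_rfl
    · split_ifs
      · exact le_rfl
      · by_cases hw : W i h = 0
        · simp [hPW i h hw]
        · exact mul_nonneg (hP i h) (ih _ (by push_cast at hk; omega) h j)

theorem aux_rec (hPW : ∀ i j, W i j = 0 → P i j = 0)
    (hF : IsHittingProb P W F) (k : ℕ) (i j : Fin n) :
    F k i j = ∑ h, P i h * (if h = j then (if k = W i h then 1 else 0)
      else F ((k : ℤ) - (W i h : ℤ)) h j) := by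
  have key : (if (k : ℤ) = (W i j : ℤ) then P i j else 0) +
        ∑ h : Fin n, (if h = j then 0 else P i h * F ((k : ℤ) - (W i h : ℤ)) h j)
      = ∑ h, P i h * (if h = j then (if k = W i h then 1 else 0)
      else F ((k : ℤ) - (W i h : ℤ)) h j) := by
    have : (if (k : ℤ) = (W i j : ℤ) then P i j else 0) =
        ∑ h : Fin n, if h = j then P i h * (if k = W i h then 1 else 0) else 0 := by
      simp
    rw [this, ← Finset.sum_add_distrib]
    refine Finset.sum_congr rfl fun h _ => ?_
    by_cases hh : h = j <;> simp [hh]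
  rw [← key]
  rcases Nat.eq_zero_or_pos k with h0 | h0
  · subst h0
    rw [hF.1 _ (by simp)]
    symm
    rw [Finset.sum_eq_zero]
    · by_cases hw : W i j = 0
      · simp [hPW i j hw]
      · have : ¬ (((0 : ℕ) : ℤ) = (W i j : ℤ)) := by omega
        rw [if_neg this, add_zero]
    · intro h _
      rw [hF.1 _ (by omega)]; simp
  · exact hF.2 k (by omega) i j

theorem aux_shift (hF : IsHittingProb P W F) (w k : ℕ) (i j : Fin n) :
    ∑ m ∈ Finset.range k, F ((m : ℤ) - (w : ℤ)) i j = ∑ m ∈ Finset.range (k - w), F m i j := by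
  induction k with
  | zero => simp
  | succ k ih =>
    rw [Finset.sum_range_succ, ih]
    by_cases h : w ≤ k
    · rw [Nat.succ_sub h, Finset.sum_range_succ]
      congr 2
      omega
    · rw [hF.1 _ (by omega), show k - w = 0 by omega, show k + 1 - w = 0 by omega]; simp

def auxG (F : ℤ → Fin n → Fin n → ℝ) (j : Fin n) (k : ℕ) (i : Fin n) : ℝ :=
  1 - ∑ m ∈ Finset.range k, F m i j

theorem auxG_rec (hPW : ∀ i j, W i j = 0 → P i j = 0) (hrow : ∀ i, ∑ j, P i j = 1)
    (hF : IsHittingProb P W F) (k : ℕ) (i j : Fin n) :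
    auxG F j k i = ∑ h, P i h * (if h = j then (if k ≤ W i h then 1 else 0)
      else auxG F j (k - W i h) h) := by
  unfold auxG
  have h1 : ∑ m ∈ Finset.range k, F m i j = ∑ h, P i h * (if h = j then
      (if k ≤ W i h then 0 else 1) else ∑ m ∈ Finset.range (k - W i h), F m h j) := by
    rw [Finset.sum_congr rfl fun m _ => aux_rec hPW hF m i j, Finset.sum_comm]
    refine Finset.sum_congr rfl fun h _ => ?_
    rw [← Finset.mul_sum]
    congr 1
    by_cases hh : h = j
    · simp only [hh, if_true]
      rw [Finset.sum_ite_eq']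
      by_cases hk : k ≤ W i j
      · simp [hk]
      · simp [hk, not_le.1 hk]
    · simp only [hh, if_false]
      exact aux_shift hF _ _ _ _
  rw [h1, ← hrow i, ← Finset.sum_sub_distrib]
  refine Finset.sum_congr rfl fun h _ => ?_
  rw [hrow i]
  split_ifs <;> ring

theorem auxG_anti (hFn : ∀ (k : ℕ) i j, 0 ≤ F k i j) (j i : Fin n) {a b : ℕ} (hab : a ≤ b) :
    auxG F j b i ≤ auxG F j a i := by
  unfold auxG
  have := Finset.sum_le_sum_of_subset_of_nonneg (f := fun m : ℕ => F m i j)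
    (Finset.range_mono hab) (fun m _ _ => hFn m i j)
  linarith

theorem auxG_nonneg (hP : ∀ i j, 0 ≤ P i j)
    (hPW : ∀ i j, W i j = 0 → P i j = 0) (hrow : ∀ i, ∑ j, P i j = 1)
    (hF : IsHittingProb P W F) (j : Fin n) : ∀ (k : ℕ) (i : Fin n), 0 ≤ auxG F j k i := by
  intro k
  induction k using Nat.strong_induction_on with
  | _ k ih =>
    intro i
    rcases Nat.eq_zero_or_pos k with h0 | h0
    · subst h0; simp [auxG]
    rw [auxG_rec hPW hrow hF]
    refine Finset.sum_nonneg fun h _ => ?_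
    by_cases hw : W i h = 0
    · simp [hPW i h hw]
    · refine mul_nonneg (hP i h) ?_
      split_ifs
      · exact zero_le_one
      · exact le_rfl
      · exact ih _ (by omega) h

theorem aux_kac (hP : ∀ i j, 0 ≤ P i j)
    (hPW : ∀ i j, W i j = 0 → P i j = 0) (hrow : ∀ i, ∑ j, P i j = 1)
    (hF : IsHittingProb P W F) (hFn : ∀ (k : ℕ) i j, 0 ≤ F k i j)
    (p : Fin n → ℝ) (hp : ∀ i, 0 < p i) (hps : ∑ i, p i = 1)
    (hst : ∀ j, ∑ i, p i * P i j = p j) (wm : ℕ) (hwm : ∀ i j, W i j ≤ wm) (j : Fin n) (K : ℕ) :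
    p j * ∑ k ∈ Finset.range K, auxG F j (k + 1) j ≤ wm := by
  set A : ℕ → ℝ := fun k => ∑ i, p i * auxG F j k i with hA
  have hA0 : ∀ k, 0 ≤ A k := fun k => Finset.sum_nonneg fun i _ =>
    mul_nonneg (hp i).le (auxG_nonneg hP hPW hrow hF j k i)
  have hA1 : ∀ k, A k ≤ 1 := fun k => by
    rw [← hps]
    refine Finset.sum_le_sum fun i _ => ?_
    have : auxG F j k i ≤ auxG F j 0 i := auxG_anti hFn j i (Nat.zero_le _)
    have h1 : auxG F j 0 i = 1 := by simp [auxG]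
    nlinarith [hp i]
  have hstep : ∀ k, 1 ≤ k → A (k + wm) + p j * auxG F j k j ≤ A k := by
    intro k hk
    have h1 : ∀ i, auxG F j (k + wm) i ≤ ∑ h, P i h * (if h = j then 0 else auxG F j k h) := by
      intro i
      rw [auxG_rec hPW hrow hF]
      refine Finset.sum_le_sum fun h _ => mul_le_mul_of_nonneg_left ?_ (hP i h)
      have := hwm i h
      split_ifs with h1 h2
      · omega
      · exact le_rfl
      · exact auxG_anti hFn j h (by omega)
    have h2 : A (k + wm) ≤ ∑ h, p h * (if h = j then 0 else auxG F j k h) := by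
      calc A (k + wm) ≤ ∑ i, p i * ∑ h, P i h * (if h = j then 0 else auxG F j k h) :=
            Finset.sum_le_sum fun i _ => mul_le_mul_of_nonneg_left (h1 i) (hp i).le
        _ = ∑ h, (∑ i, p i * P i h) * (if h = j then 0 else auxG F j k h) := by
            simp_rw [Finset.mul_sum, Finset.sum_mul]
            rw [Finset.sum_comm]
            refine Finset.sum_congr rfl fun _ _ => Finset.sum_congr rfl fun _ _ => ?_
            ring
        _ = _ := by simp_rw [hst]
    have h3 : p j * auxG F j k j = ∑ h, p h * (if h = j then auxG F j k h else 0) := by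
      simp
    have h4 : ∑ h, p h * (if h = j then 0 else auxG F j k h) + p j * auxG F j k j = A k := by
      rw [h3, ← Finset.sum_add_distrib]
      refine Finset.sum_congr rfl fun h _ => ?_
      split_ifs <;> ring
    linarith
  have main : ∀ K, p j * ∑ k ∈ Finset.range K, auxG F j (k + 1) j
      + ∑ m ∈ Finset.range wm, A (K + 1 + m) ≤ wm := by
    intro K
    induction K with
    | zero =>
      simp only [Finset.range_zero, Finset.sum_empty, mul_zero, zero_add]
      calc _ ≤ ∑ m ∈ Finset.range wm, (1 : ℝ) := Finset.sum_le_sum fun _ _ => hA1 _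
        _ = wm := by simp
    | succ K ih =>
      have e1 := Finset.sum_range_succ (fun m => A (K + 1 + m)) wm
      have e2 := Finset.sum_range_succ' (fun m => A (K + 1 + m)) wm
      have e3 : ∑ m ∈ Finset.range wm, A (K + 1 + (m + 1)) =
          ∑ m ∈ Finset.range wm, A (K + 1 + 1 + m) :=
        Finset.sum_congr rfl fun m _ => by congr 1; omega
      have := hstep (K + 1) (by omega)
      rw [Finset.sum_range_succ, mul_add]
      simp only [add_zero] at e2
      linarith
  have := main K
  have h0 : 0 ≤ ∑ m ∈ Finset.range wm, A (K + 1 + m) := Finset.sum_nonneg fun _ _ => hA0 _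
  linarith

end aux

theorem aux_negMulLog_le {x y : ℝ} (hx : 0 ≤ x) (hxy : x ≤ y) (hy : Real.log y ≤ -1) :
    Real.negMulLog x ≤ Real.negMulLog y := by
  unfold Real.negMulLog
  rcases hx.eq_or_lt with h | h
  · subst h
    simp
    nlinarith
  · have hy0 : 0 < y := h.trans_le hxy
    have h1 : Real.log (y / x) ≤ y / x - 1 := Real.log_le_sub_one_of_pos (by positivity)
    rw [Real.log_div hy0.ne' h.ne'] at h1
    have h2 : x * (Real.log y - Real.log x) ≤ y - x := by
      calc _ ≤ x * (y / x - 1) := mul_le_mul_of_nonneg_left h1 hx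
        _ = y - x := by field_simp
    nlinarith

theorem aux_tail (f : ℕ → ℝ) (c lam : ℝ) (N : ℕ) (hc : 0 < c) (h0 : 0 < lam) (h1 : lam < 1)
    (hf0 : ∀ k, 0 ≤ f k) (hf : ∀ k, 1 ≤ k → f k ≤ c * lam ^ k)
    (hlog : ∀ k : ℕ, N + 1 ≤ k → Real.log c + k * Real.log lam ≤ -1)
    (hcN : -Real.log c ≤ N) :
    0 ≤ (∑' k : ℕ, Real.negMulLog (f (k + 1))) - ∑ k ∈ Finset.Icc 1 N, Real.negMulLog (f k) ∧
    (∑' k : ℕ, Real.negMulLog (f (k + 1))) - ∑ k ∈ Finset.Icc 1 N, Real.negMulLog (f k) ≤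
        c * Real.log (1 / lam) / (1 - lam) ^ 2 * ((1 + (N : ℝ)) * lam ^ N) := by
  have hll : ∀ k : ℕ, Real.log (c * lam ^ k) = Real.log c + k * Real.log lam := fun k => by
    rw [Real.log_mul hc.ne' (pow_pos h0 k).ne', Real.log_pow]
  have hle : ∀ k : ℕ, Real.negMulLog (f (k + N + 1)) ≤ Real.negMulLog (c * lam ^ (k + N + 1)) :=
    fun k => aux_negMulLog_le (hf0 _) (hf _ (by omega)) (by rw [hll]; exact hlog _ (by omega))
  have hnn : ∀ k : ℕ, 0 ≤ Real.negMulLog (f (k + N + 1)) := fun k => by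
    refine Real.negMulLog_nonneg (hf0 _) ((hf _ (by omega)).trans ?_)
    have : 0 < c * lam ^ (k + N + 1) := by positivity
    rw [← Real.log_nonpos_iff this.le, hll]
    linarith [hlog (k + N + 1) (by omega)]
  set l := -Real.log lam with hl
  have hl1 : 1 - lam ≤ l := by
    have := Real.log_le_sub_one_of_pos h0
    linarith
  have hs : HasSum (fun k : ℕ => Real.negMulLog (c * lam ^ (k + N + 1)))
      (c * lam ^ (N + 1) * (-Real.log c + (N + 1) * l) * (1 - lam)⁻¹ +
        c * lam ^ (N + 1) * l * (lam / (1 - lam) ^ 2)) := by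
    have a1 := (hasSum_geometric_of_lt_one h0.le h1).mul_left
      (c * lam ^ (N + 1) * (-Real.log c + (N + 1) * l))
    have a2 := (hasSum_coe_mul_geometric_of_norm_lt_one (𝕜 := ℝ) (r := lam)
      (by rw [Real.norm_eq_abs, abs_of_pos h0]; exact h1)).mul_left (c * lam ^ (N + 1) * l)
    have e : (fun k : ℕ => Real.negMulLog (c * lam ^ (k + N + 1))) = fun k : ℕ =>
        c * lam ^ (N + 1) * (-Real.log c + (N + 1) * l) * lam ^ k +
          c * lam ^ (N + 1) * l * (k * lam ^ k) := by
      funext k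
      simp only [Real.negMulLog, hll]
      push_cast
      rw [hl]
      ring
    rw [e]
    exact a1.add a2
  have hsum : Summable (fun k : ℕ => Real.negMulLog (f (k + N + 1))) :=
    Summable.of_nonneg_of_le hnn hle hs.summable
  have hsum' : Summable (fun k : ℕ => Real.negMulLog (f (k + 1))) := by
    rw [← summable_nat_add_iff N]; exact hsum
  have e1 := hsum'.sum_add_tsum_nat_add N
  have e2 : ∑ k ∈ Finset.range N, Real.negMulLog (f (k + 1)) =
      ∑ k ∈ Finset.Icc 1 N, Real.negMulLog (f k) := by
    rw [Finset.range_eq_Ico, Finset.sum_Ico_add' (fun k => Real.negMulLog (f k)) 0 N 1]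
    rfl
  have e3 : (∑' k : ℕ, Real.negMulLog (f (k + 1))) - ∑ k ∈ Finset.Icc 1 N, Real.negMulLog (f k)
      = ∑' k : ℕ, Real.negMulLog (f (k + N + 1)) := by
    rw [← e1, e2]; ring
  rw [e3]
  refine ⟨tsum_nonneg hnn, ?_⟩
  have h5 := hsum.tsum_le_tsum hle hs.summable
  rw [hs.tsum_eq] at h5
  refine h5.trans ?_
  have h6 : 0 < 1 - lam := by linarith
  rw [one_div, Real.log_inv, ← hl]
  have e4 : c * lam ^ (N + 1) * (-Real.log c + (N + 1) * l) * (1 - lam)⁻¹ +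
        c * lam ^ (N + 1) * l * (lam / (1 - lam) ^ 2) = c * lam ^ N / (1 - lam) ^ 2 *
        (lam * ((-Real.log c + (N + 1) * l) * (1 - lam) + l * lam)) := by
    field_simp
    ring
  have e5 : c * l / (1 - lam) ^ 2 * ((1 + (N : ℝ)) * lam ^ N) = c * lam ^ N / (1 - lam) ^ 2 *
      (l * (1 + N)) := by ring
  rw [e4, e5]
  refine mul_le_mul_of_nonneg_left ?_ (by positivity)
  have hN : (0 : ℝ) ≤ N := by positivity
  have b1 : lam * (1 - lam) * (-Real.log c) ≤ lam * (1 - lam) * N :=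
    mul_le_mul_of_nonneg_left hcN (by positivity)
  have b2 : lam * N * (1 - lam) ≤ lam * N * l := mul_le_mul_of_nonneg_left hl1 (by positivity)
  have b3 : 0 ≤ l * (N * (1 - lam) ^ 2 + (1 - lam)) := by
    have : 0 ≤ l := by linarith
    positivity
  nlinarith

/-- if `F_k(i,i) ≤ c·λ_max^k` uniformly on the `ε`-conforming
set with `c > 0`, `λ_max ∈ (0,1)`, and the truncation accuracy `η ∈ (0,1)`
satisfies `η ≤ w_max log λ_max / (π_min (log λ_max − log c − 1))`, then
`0 ≤ J(P) − J_trunc,η(P) ≤ c log(1/λ_max)/(1−λ_max)² · (1+N_η) λ_max^{N_η}`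
where `N_η = ⌈w_max/(η π_min)⌉ − 1`. -/
theorem truncation_error_bound {n : ℕ}
    (Adj : Fin n → Fin n → Prop) (W : Matrix (Fin n) (Fin n) ℕ)
    (pivec : Fin n → ℝ) (ε : ℝ)
    (hconn : ∀ i j, Relation.ReflTransGen Adj i j)
    (hW1 : ∀ i j, Adj i j → 1 ≤ W i j)
    (hW0 : ∀ i j, ¬ Adj i j → W i j = 0)
    (hpi : ∀ i, 0 < pivec i) (hpisum : ∑ i, pivec i = 1)
    (hε : 0 < ε) (hne : (Conf Adj pivec ε).Nonempty)
    (F : Matrix (Fin n) (Fin n) ℝ → ℤ → Fin n → Fin n → ℝ)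
    (hF : ∀ P ∈ Conf Adj pivec ε, IsHittingProb P W (F P))
    (c lam : ℝ) (hc : 0 < c) (hlam : lam ∈ Set.Ioo (0 : ℝ) 1)
    (hbound : ∀ P ∈ Conf Adj pivec ε, ∀ i : Fin n, ∀ k : ℕ, 1 ≤ k →
      F P (k : ℤ) i i ≤ c * lam ^ k)
    (wmax : ℕ) (hwmax : wmax = Finset.univ.sup (fun p : Fin n × Fin n => W p.1 p.2))
    (pimin : ℝ) (hpimin : IsLeast (Set.range pivec) pimin)
    (η : ℝ) (hη : η ∈ Set.Ioo (0 : ℝ) 1)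
    (hηcond : η ≤ (wmax : ℝ) * Real.log lam / (pimin * (Real.log lam - Real.log c - 1)))
    (Nη : ℕ) (hNη : Nη = ⌈(wmax : ℝ) / (η * pimin)⌉₊ - 1) :
    ∀ P ∈ Conf Adj pivec ε,
      0 ≤ (∑ i : Fin n, pivec i * ∑' k : ℕ, Real.negMulLog (F P ((k : ℤ) + 1) i i)) -
          (∑ i : Fin n, pivec i *
            ∑ k ∈ Finset.Icc 1 Nη, Real.negMulLog (F P (k : ℤ) i i)) ∧
      (∑ i : Fin n, pivec i * ∑' k : ℕ, Real.negMulLog (F P ((k : ℤ) + 1) i i)) -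
          (∑ i : Fin n, pivec i *
            ∑ k ∈ Finset.Icc 1 Nη, Real.negMulLog (F P (k : ℤ) i i)) ≤
        c * Real.log (1 / lam) / (1 - lam) ^ 2 * ((1 + (Nη : ℝ)) * lam ^ Nη) := by
  intro P hPc
  obtain ⟨hlam0, hlam1⟩ := hlam
  obtain ⟨hη0, hη1⟩ := hη
  have hPc' := hPc
  obtain ⟨hPA, hPN, hrow, hst⟩ := hPc'
  have hP : ∀ i j, 0 ≤ P i j := fun i j => by
    by_cases h : Adj i j
    · exact hε.le.trans (hPA i j h)
    · exact (hPN i j h).ge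
  have hPW : ∀ i j, W i j = 0 → P i j = 0 := fun i j h => by
    by_cases h' : Adj i j
    · have := hW1 i j h'; omega
    · exact hPN i j h'
  have hFP := hF P hPc
  have hFn : ∀ (k : ℕ) i j, 0 ≤ F P k i j := fun k i j =>
    aux_nonneg hP hPW hFP k k le_rfl i j
  obtain ⟨⟨j0, hj0⟩, hmin⟩ := hpimin
  have hpm : 0 < pimin := hj0 ▸ hpi j0
  have hwle : ∀ i j, W i j ≤ wmax := fun i j => by
    rw [hwmax]
    exact Finset.le_sup (f := fun p : Fin n × Fin n => W p.1 p.2) (Finset.mem_univ (i, j))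
  have hL : Real.log lam < 0 := Real.log_neg hlam0 hlam1
  have hw1 : 1 ≤ wmax := by
    by_contra h
    have : wmax = 0 := by omega
    rw [this] at hηcond
    simp at hηcond
    linarith
  have hw1' : (1 : ℝ) ≤ wmax := by exact_mod_cast hw1
  have hD : Real.log lam - Real.log c - 1 < 0 := by
    by_contra h
    push Not at h
    have : (wmax : ℝ) * Real.log lam / (pimin * (Real.log lam - Real.log c - 1)) ≤ 0 :=
      div_nonpos_of_nonpos_of_nonneg (by nlinarith) (by positivity)
    linarith
  have hceil : (wmax : ℝ) / (η * pimin) ≤ (Nη : ℝ) + 1 := by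
    have h1 := Nat.le_ceil ((wmax : ℝ) / (η * pimin))
    have h2 : ⌈(wmax : ℝ) / (η * pimin)⌉₊ ≤ Nη + 1 := by omega
    have h3 : ((⌈(wmax : ℝ) / (η * pimin)⌉₊ : ℕ) : ℝ) ≤ (Nη : ℝ) + 1 := by exact_mod_cast h2
    linarith
  have hN1 : (wmax : ℝ) ≤ (Nη + 1) * (η * pimin) := (div_le_iff₀ (by positivity)).1 hceil
  have hN2 : (wmax : ℝ) < (Nη + 1) * pimin := by
    refine hN1.trans_lt ?_
    have : (0 : ℝ) < (Nη + 1) * pimin := by positivity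
    nlinarith
  have hlog : ∀ k : ℕ, Nη + 1 ≤ k → Real.log c + k * Real.log lam ≤ -1 := by
    intro k hk
    have hk' : (Nη : ℝ) + 1 ≤ k := by exact_mod_cast hk
    have h1 : (wmax : ℝ) * Real.log lam ≤ η * (pimin * (Real.log lam - Real.log c - 1)) :=
      (le_div_iff_of_neg (by nlinarith)).1 hηcond
    have hq : 0 < η * pimin := by positivity
    have h2 : (wmax : ℝ) ≤ k * (η * pimin) :=
      hN1.trans (mul_le_mul_of_nonneg_right hk' hq.le)
    have h3 : k * (η * pimin) * Real.log lam ≤ η * (pimin * (Real.log lam - Real.log c - 1)) := by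
      nlinarith
    have h4 : (η * pimin) * (k * Real.log lam) ≤ (η * pimin) * (Real.log lam - Real.log c - 1) := by
      linarith
    have h5 := le_of_mul_le_mul_left h4 hq
    linarith
  have hnp : (n : ℝ) * pimin ≤ 1 := by
    rw [← hpisum]
    calc (n : ℝ) * pimin = ∑ i : Fin n, pimin := by simp
      _ ≤ _ := Finset.sum_le_sum fun i _ => hmin ⟨i, rfl⟩
  have hcN : -Real.log c ≤ Nη := by
    by_cases hN : 2 ≤ Nη
    · have hN' : (2 : ℝ) ≤ Nη := by exact_mod_cast hN
      have hk := aux_kac hP hPW hrow hFP hFn pivec hpi hpisum hst wmax hwle j0 (2 * Nη + 1)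
      rw [hj0] at hk
      have hF1 : ∀ m : ℕ, F P m j0 j0 ≤ c := fun m => by
        rcases Nat.eq_zero_or_pos m with h | h
        · subst h; rw [hFP.1 _ (by simp)]; exact hc.le
        · refine (hbound P hPc j0 m h).trans ?_
          have : lam ^ m ≤ 1 := pow_le_one₀ hlam0.le hlam1.le
          nlinarith
      have hG : ∀ k : ℕ, 1 - c * k ≤ auxG (F P) j0 (k + 1) j0 := fun k => by
        unfold auxG
        rw [Finset.sum_range_succ', Nat.cast_zero, hFP.1 0 le_rfl]
        have : ∑ m ∈ Finset.range k, F P ((m + 1 : ℕ) : ℤ) j0 j0 ≤ ∑ m ∈ Finset.range k, c :=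
          Finset.sum_le_sum fun m _ => hF1 (m + 1)
        simp only [Finset.sum_const, Finset.card_range, nsmul_eq_mul] at this
        linarith
      have hS : ∀ K : ℕ, (K : ℝ) - c * (K * (K - 1) / 2) ≤
          ∑ k ∈ Finset.range K, auxG (F P) j0 (k + 1) j0 := by
        intro K
        induction K with
        | zero => simp
        | succ K ih =>
          rw [Finset.sum_range_succ]
          have := hG K
          push_cast
          linarith
      have h1 := hS (2 * Nη + 1)
      have h2 : pimin * ∑ k ∈ Finset.range (2 * Nη + 1), auxG (F P) j0 (k + 1) j0
          < pimin * (Nη + 1) := by linarith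
      have h3 := lt_of_mul_lt_mul_left h2 hpm.le
      push_cast at h1
      have h4 : (Nη : ℝ) * 1 < Nη * (c * (2 * Nη + 1)) := by linarith
      have h5 := lt_of_mul_lt_mul_left h4 (by positivity)
      have h6 : (2 * Nη + 1 : ℝ) ≤ Real.exp Nη := by
        have := Real.quadratic_le_exp_of_nonneg (x := (Nη : ℝ)) (by positivity)
        nlinarith
      have h7 : 1 ≤ c * Real.exp Nη := by nlinarith
      have h8 := Real.log_nonneg h7
      rw [Real.log_mul hc.ne' (Real.exp_pos _).ne', Real.log_exp] at h8
      linarith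
    · have hN' : (Nη : ℝ) ≤ 1 := by
        have : Nη ≤ 1 := by omega
        exact_mod_cast this
      have hn : n = 1 := by
        have h0 : 0 < n := j0.pos
        by_contra h
        have h2 : (2 : ℝ) ≤ n := by
          have : 2 ≤ n := by omega
          exact_mod_cast this
        nlinarith
      have hwm : wmax = 1 := by
        subst hn
        by_contra h
        have h2 : (2 : ℝ) ≤ wmax := by
          have : 2 ≤ wmax := by omega
          exact_mod_cast this
        norm_num at hnp
        nlinarith
      subst hn
      have hp1 : P j0 j0 = 1 := by
        have := hrow j0
        rw [Fin.sum_univ_one] at this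
        rwa [Subsingleton.elim (0 : Fin 1) j0] at this
      have hWj : W j0 j0 = 1 := by
        have h1 := hwle j0 j0
        have h2 : W j0 j0 ≠ 0 := fun h => by
          have := hPW j0 j0 h
          linarith
        omega
      have h1 := hbound P hPc j0 1 le_rfl
      have h2 : F P ((1 : ℕ) : ℤ) j0 j0 = 1 := by
        rw [hFP.2 _ (by simp), hWj, hp1, if_pos rfl, Finset.sum_eq_zero]
        · simp
        · intro h _
          rw [if_pos (Subsingleton.elim _ _)]
      rw [h2] at h1
      have h3 : 1 ≤ c := by nlinarith
      have := Real.log_nonneg h3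
      have hz : (0 : ℝ) ≤ Nη := by positivity
      linarith
  have key := fun i => aux_tail (fun k : ℕ => F P k i i) c lam Nη hc hlam0 hlam1
    (fun k => hFn k i i) (hbound P hPc i) hlog hcN
  simp only [Nat.cast_add, Nat.cast_one] at key
  rw [← Finset.sum_sub_distrib]
  simp_rw [← mul_sub]
  refine ⟨Finset.sum_nonneg fun i _ => mul_nonneg (hpi i).le (key i).1, ?_⟩
  refine (Finset.sum_le_sum fun i _ => mul_le_mul_of_nonneg_left (key i).2 (hpi i).le).trans ?_
  rw [← Finset.sum_mul, hpisum, one_mul]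
end
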